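/- Let ρ₀ satisfy the stated first-order equation with limits a and b at ∓∞, and fix α with 0 < α < min{√2(b² − a²)a, √2(b² − a²)b}. Let h : ℝ → ℝ be continuous and suppose there are real numbers h⁺, h⁻ and C > 0 with |h(z) − h⁺| ≤ C e^{−αz} for z ≥ 0 and |h(z) − h⁻| ≤ C e^{αz} for z ≤ 0, and suppose ∫_ℝ h(z) ρ₀'(z) dz = 0. Then v₁*(z) := ρ₀'(z) · ∫₀^z ρ₀'(ς)^{−2} ( ∫_ς^{+∞} h(τ) ρ₀'(τ) dτ ) dς is bounded on ℝ, with lim_{z→+∞} v₁*(z) = h⁺ / (2(a² − b²)² b²) and lim_{z→−∞} v₁*(z) = h⁻ / (2(a² − b²)² a²). -/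

import Mathlib

open Filter MeasureTheory

/-- `v₁*(z) = ρ₀'(z) ∫₀^z ρ₀'(ς)⁻² (∫_ς^∞ h(τ)ρ₀'(τ) dτ) dς`. -/
noncomputable def v1star (ρ₀ h : ℝ → ℝ) (z : ℝ) : ℝ :=
  deriv ρ₀ z *
    ∫ ς in (0:ℝ)..z, ((deriv ρ₀ ς) ^ 2)⁻¹ * ∫ τ in Set.Ioi ς, h τ * deriv ρ₀ τ

/-!
Write `w = ρ'` for an increasing heteroclinic orbit `ρ` of `u' = F u`. Differentiating the equation
gives `w' = F'(ρ) w`, so the logarithmic derivative of `w` tends to the value `c` of `F'` at each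
limiting equilibrium. At `+∞`, where `c < 0`, l'Hôpital's rule is used twice: with
`G ς = ∫_ς^∞ h w` and `H = h(+∞)`, the quotient `G / w` (form `0 / 0`) tends to `-H / c`, and then
`v₁* = (∫₀^z w⁻² G) / w⁻¹` (form `∞ / ∞`) tends to `H / c²`. The limit at `-∞` is the same result
for the reflected orbit `-ρ(-z)`: the orthogonality condition turns `∫_{-∞}^ς h w` into `-G ς`,
which makes `v₁*` equivariant under this reflection.
-/

open Set Topology Asymptotics

section LHopital

theorem isLittleO_of_hasDerivAt_isLittleO {E : Type*} [NormedAddCommGroup E] [NormedSpace ℝ E]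
    {f f' : ℝ → E} {g g' : ℝ → ℝ} (hf : ∀ᶠ x in atTop, HasDerivAt f (f' x) x)
    (hg : ∀ᶠ x in atTop, HasDerivAt g (g' x) x) (hg' : ∀ᶠ x in atTop, 0 ≤ g' x)
    (hg_top : Tendsto g atTop atTop) (hfg : f' =o[atTop] g') : f =o[atTop] g := by
  refine isLittleO_iff.2 fun ε hε => ?_
  obtain ⟨a, ha⟩ := eventually_atTop.1 (hf.and (hg.and (hg'.and (hfg.bound (half_pos hε)))))
  have growth (x : ℝ) (hx : a ≤ x) : ‖f x‖ ≤ ‖f a‖ + ε / 2 * (g x - g a) := by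
    have hB (y : ℝ) (hy : a ≤ y) :
        HasDerivAt (fun z => ‖f a‖ + ε / 2 * (g z - g a)) (ε / 2 * g' y) y :=
      (((ha y hy).2.1.sub_const _).const_mul _).const_add _
    refine image_norm_le_of_norm_deriv_right_le_deriv_boundary'
      (fun y hy => (ha y hy.1).1.continuousAt.continuousWithinAt)
      (fun y hy => (ha y hy.1).1.hasDerivWithinAt) (by simp)
      (fun y hy => (hB y hy.1).continuousAt.continuousWithinAt)
      (fun y hy => (hB y hy.1).hasDerivWithinAt) (fun y hy => ?_) ⟨hx, le_rfl⟩
    obtain ⟨-, -, hnonneg, hle⟩ := ha y hy.1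
    rwa [Real.norm_of_nonneg hnonneg] at hle
  filter_upwards [eventually_ge_atTop a, hg_top.eventually_ge_atTop 0,
    (hg_top.const_mul_atTop (half_pos hε)).eventually_ge_atTop (‖f a‖ - ε / 2 * g a)]
    with x hx hgx hlarge
  rw [Real.norm_of_nonneg hgx]
  linarith [growth x hx]

theorem tendsto_div_of_tendsto_deriv_div_atTop {f f' g g' : ℝ → ℝ} {L : ℝ}
    (hf : ∀ᶠ x in atTop, HasDerivAt f (f' x) x) (hg : ∀ᶠ x in atTop, HasDerivAt g (g' x) x)
    (hg' : ∀ᶠ x in atTop, 0 < g' x) (hg_top : Tendsto g atTop atTop)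
    (hL : Tendsto (fun x => f' x / g' x) atTop (𝓝 L)) :
    Tendsto (fun x => f x / g x) atTop (𝓝 L) := by
  have hderiv : (fun x => f' x - L * g' x) =o[atTop] g' := by
    refine isLittleO_of_tendsto' (hg'.mono fun x hx h0 => absurd h0 hx.ne') ?_
    refine (sub_self L ▸ hL.sub_const L).congr' ?_
    filter_upwards [hg'] with x hx
    rw [sub_div, mul_div_cancel_right₀ _ hx.ne']
  have hsub : (fun x => f x - L * g x) =o[atTop] g :=
    isLittleO_of_hasDerivAt_isLittleO
      (hf.mp (hg.mono fun x hgx hfx => hfx.sub (hgx.const_mul L))) hg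
      (hg'.mono fun _ => le_of_lt) hg_top hderiv
  refine (zero_add L ▸ hsub.tendsto_div_nhds_zero.add_const L).congr' ?_
  filter_upwards [hg_top.eventually_gt_atTop 0] with x hx
  rw [sub_div, mul_div_cancel_right₀ _ hx.ne', sub_add_cancel]

end LHopital

section LogDeriv

variable {w : ℝ → ℝ} {c : ℝ}

theorem eventually_hasDerivAt_logDeriv_mul {l : Filter ℝ}
    (hlog : Tendsto (logDeriv w) l (𝓝 c)) (hc : c ≠ 0) :
    ∀ᶠ x in l, HasDerivAt w (logDeriv w x * w x) x := by
  filter_upwards [hlog.eventually_ne hc] with x hx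
  obtain ⟨hdw, hwx⟩ := div_ne_zero_iff.1 (logDeriv_apply w x ▸ hx)
  rw [logDeriv_apply, div_mul_cancel₀ _ hwx]
  exact (differentiableAt_of_deriv_ne_zero hdw).hasDerivAt

theorem tendsto_zero_of_tendsto_logDeriv_neg (hpos : ∀ᶠ x in atTop, 0 < w x)
    (hlog : Tendsto (logDeriv w) atTop (𝓝 c)) (hc : c < 0) : Tendsto w atTop (𝓝 0) := by
  have hslope : Tendsto (fun x => Real.log (w x) / x) atTop (𝓝 c) := by
    refine tendsto_div_of_tendsto_deriv_div_atTop (f' := logDeriv w) ?_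
      (.of_forall hasDerivAt_id) (.of_forall fun _ => one_pos) tendsto_id (by simpa using hlog)
    filter_upwards [hpos, eventually_hasDerivAt_logDeriv_mul hlog hc.ne] with x hx hwx
    simpa only [mul_div_cancel_right₀ _ hx.ne'] using hwx.log hx.ne'
  have hlog_bot : Tendsto (fun x => Real.log (w x)) atTop atBot := by
    refine (hslope.neg_mul_atTop hc tendsto_id).congr' ?_
    filter_upwards [eventually_ne_atTop 0] with x hx using div_mul_cancel₀ _ hx
  refine (Real.tendsto_exp_atBot.comp hlog_bot).congr' ?_
  filter_upwards [hpos] with x hx using Real.exp_log hx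

theorem tendsto_div_of_hasDerivAt_neg_mul {f G : ℝ → ℝ} {H : ℝ}
    (hpos : ∀ᶠ x in atTop, 0 < w x) (hlog : Tendsto (logDeriv w) atTop (𝓝 c)) (hc : c < 0)
    (hf : Tendsto f atTop (𝓝 H)) (hG : ∀ᶠ x in atTop, HasDerivAt G (-(f x * w x)) x)
    (hG_zero : Tendsto G atTop (𝓝 0)) :
    Tendsto (fun x => G x / w x) atTop (𝓝 (-H / c)) := by
  refine HasDerivAt.lhopital_zero_atTop hG (eventually_hasDerivAt_logDeriv_mul hlog hc.ne) ?_
    hG_zero (tendsto_zero_of_tendsto_logDeriv_neg hpos hlog hc) ?_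
  · filter_upwards [hpos, hlog.eventually_ne hc.ne] with x hx hlx using mul_ne_zero hlx hx.ne'
  · refine (hf.neg.div hlog hc.ne).congr' ?_
    filter_upwards [hpos] with x hx
    rw [Pi.div_apply, ← neg_mul, mul_div_mul_right _ _ hx.ne']

theorem tendsto_mul_of_tendsto_mul_deriv {I I' : ℝ → ℝ} {m : ℝ}
    (hpos : ∀ᶠ x in atTop, 0 < w x) (hlog : Tendsto (logDeriv w) atTop (𝓝 c)) (hc : c < 0)
    (hI : ∀ᶠ x in atTop, HasDerivAt I (I' x) x)
    (hm : Tendsto (fun x => w x * I' x) atTop (𝓝 m)) :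
    Tendsto (fun x => w x * I x) atTop (𝓝 (-m / c)) := by
  have hdinv : ∀ᶠ x in atTop, HasDerivAt (fun y => (w y)⁻¹) (-logDeriv w x / w x) x := by
    filter_upwards [hpos, eventually_hasDerivAt_logDeriv_mul hlog hc.ne] with x hx hwx
    refine (hwx.inv hx.ne').congr_deriv ?_
    field_simp
  have hdinv_pos : ∀ᶠ x in atTop, 0 < -logDeriv w x / w x := by
    filter_upwards [hpos, hlog.eventually_lt_const hc] with x hx hlx
      using div_pos (neg_pos.2 hlx) hx
  have hinv_top : Tendsto (fun x => (w x)⁻¹) atTop atTop :=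
    (tendsto_nhdsWithin_iff.2
      ⟨tendsto_zero_of_tendsto_logDeriv_neg hpos hlog hc, hpos⟩).inv_tendsto_nhdsGT_zero
  have hquot : Tendsto (fun x => I' x / (-logDeriv w x / w x)) atTop (𝓝 (-m / c)) := by
    rw [neg_div, ← div_neg]
    refine (hm.div hlog.neg (neg_ne_zero.2 hc.ne)).congr fun x => ?_
    rw [Pi.div_apply, div_div_eq_mul_div, mul_comm]
  refine (tendsto_div_of_tendsto_deriv_div_atTop hI hdinv hdinv_pos hinv_top hquot).congr
    fun x => ?_
  rw [div_inv_eq_mul, mul_comm]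

end LogDeriv

section RealLine

variable {E : Type*} [NormedAddCommGroup E]

theorem exists_norm_le_of_tendsto_atBot_atTop {f : ℝ → E} (hf : Continuous f) {l m : E}
    (hbot : Tendsto f atBot (𝓝 l)) (htop : Tendsto f atTop (𝓝 m)) : ∃ M, ∀ x, ‖f x‖ ≤ M := by
  have hbounded := hf.isBounded_range_iff_isBigO_atTop_atBot.2
    ⟨htop.isBigO_one ℝ, hbot.isBigO_one ℝ⟩
  simpa only [forall_mem_range] using isBounded_iff_forall_norm_le.1 hbounded

theorem deriv_neg_comp_neg [NormedSpace ℝ E] (f : ℝ → E) :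
    (deriv fun z => -f (-z)) = fun z => deriv f (-z) := by
  funext z
  rw [deriv.fun_neg, deriv_comp_neg, neg_neg]

theorem hasDerivAt_integral_Ioi [NormedSpace ℝ E] [CompleteSpace E] {f : ℝ → E}
    (hf : Continuous f) {a : ℝ} (hint : IntegrableOn f (Ioi a)) (x : ℝ) :
    HasDerivAt (fun y => ∫ t in Ioi y, f t) (-f x) x := by
  have hsplit : (fun y => ∫ t in Ioi y, f t) =
      fun y => (∫ t in y..a, f t) + ∫ t in Ioi a, f t := funext fun y =>
    (intervalIntegral.integral_interval_add_Ioi' (hf.intervalIntegrable y a) hint).symm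
  rw [hsplit]
  exact (intervalIntegral.integral_hasDerivAt_left (hf.intervalIntegrable _ _)
    (hf.stronglyMeasurableAtFilter _ _) hf.continuousAt).add_const _

theorem integrable_of_hasDerivAt_of_nonneg {g g' : ℝ → ℝ} {l m : ℝ}
    (hg : ∀ x, HasDerivAt g (g' x) x) (hg' : ∀ x, 0 ≤ g' x)
    (hbot : Tendsto g atBot (𝓝 l)) (htop : Tendsto g atTop (𝓝 m)) : Integrable g' := by
  have hloc (a b : ℝ) : IntegrableOn g' (Ioc a b) :=
    intervalIntegral.integrableOn_deriv_of_nonneg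
      (fun x _ => (hg x).continuousAt.continuousWithinAt) (fun x _ => hg x) fun x _ => hg' x
  refine integrable_of_intervalIntegral_norm_tendsto (m - l) (fun x : ℝ => hloc (-x) x)
    tendsto_neg_atTop_atBot tendsto_id ?_
  refine (htop.sub (hbot.comp tendsto_neg_atTop_atBot)).congr fun x => ?_
  simp only [Real.norm_of_nonneg (hg' _)]
  exact (intervalIntegral.integral_eq_sub_of_hasDerivAt (fun y _ => hg y)
    ⟨hloc (-x) x, hloc x (-x)⟩).symm

theorem tendsto_of_norm_sub_le_mul_exp {ι : Type*} {l : Filter ι} {f : ι → E} {u : ι → ℝ} {L : E}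
    {C : ℝ} (hu : Tendsto u l atBot) (hf : ∀ᶠ x in l, ‖f x - L‖ ≤ C * Real.exp (u x)) :
    Tendsto f l (𝓝 L) := by
  refine tendsto_iff_norm_sub_tendsto_zero.2
    (squeeze_zero' (.of_forall fun _ => norm_nonneg _) hf ?_)
  simpa only [mul_zero, Function.comp_apply] using
    (Real.tendsto_exp_atBot.comp hu).const_mul C

end RealLine

section V1star

variable {ρ h : ℝ → ℝ} {a c H : ℝ}

theorem hasDerivAt_integral_inv_sq_mul_integral_Ioi {w : ℝ → ℝ} (hw : Continuous w)
    (hw_ne : ∀ x, w x ≠ 0) (hh : Continuous h)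
    (hint : IntegrableOn (fun τ => h τ * w τ) (Ioi a)) (z : ℝ) :
    HasDerivAt (fun y => ∫ ς in (0 : ℝ)..y, ((w ς) ^ 2)⁻¹ * ∫ τ in Ioi ς, h τ * w τ)
      (((w z) ^ 2)⁻¹ * ∫ τ in Ioi z, h τ * w τ) z := by
  have htail : Continuous fun ς => ∫ τ in Ioi ς, h τ * w τ :=
    continuous_iff_continuousAt.2 fun x =>
      (hasDerivAt_integral_Ioi (hh.mul hw) hint x).continuousAt
  have hintegrand : Continuous fun ς => ((w ς) ^ 2)⁻¹ * ∫ τ in Ioi ς, h τ * w τ :=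
    ((hw.pow 2).inv₀ fun x => pow_ne_zero 2 (hw_ne x)).mul htail
  exact (hintegrand.integral_hasStrictDerivAt 0 z).hasDerivAt

theorem continuous_v1star (hρ : Continuous (deriv ρ)) (hρ_ne : ∀ z, deriv ρ z ≠ 0)
    (hh : Continuous h) (hint : IntegrableOn (fun τ => h τ * deriv ρ τ) (Ioi a)) :
    Continuous (v1star ρ h) :=
  hρ.mul <| continuous_iff_continuousAt.2 fun z =>
    (hasDerivAt_integral_inv_sq_mul_integral_Ioi hρ hρ_ne hh hint z).continuousAt

theorem tendsto_v1star_atTop (hρ : Continuous (deriv ρ)) (hρ_pos : ∀ z, 0 < deriv ρ z)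
    (hlog : Tendsto (logDeriv (deriv ρ)) atTop (𝓝 c)) (hc : c < 0) (hh : Continuous h)
    (hint : IntegrableOn (fun τ => h τ * deriv ρ τ) (Ioi a)) (hH : Tendsto h atTop (𝓝 H)) :
    Tendsto (v1star ρ h) atTop (𝓝 (H / c ^ 2)) := by
  have htail : Tendsto (fun x => (∫ τ in Ioi x, h τ * deriv ρ τ) / deriv ρ x) atTop
      (𝓝 (-H / c)) :=
    tendsto_div_of_hasDerivAt_neg_mul (.of_forall hρ_pos) hlog hc hH
      (.of_forall (hasDerivAt_integral_Ioi (hh.mul hρ) hint)) (tendsto_integral_Ioi_zero tendsto_id)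
  have hlimit : H / c ^ 2 = -(-H / c) / c := by ring
  rw [hlimit]
  refine tendsto_mul_of_tendsto_mul_deriv (.of_forall hρ_pos) hlog hc
    (.of_forall (hasDerivAt_integral_inv_sq_mul_integral_Ioi hρ (fun z => (hρ_pos z).ne') hh hint))
    (htail.congr fun x => ?_)
  have := (hρ_pos x).ne'
  field_simp

theorem v1star_neg_comp_neg (hint : Integrable fun τ => h τ * deriv ρ τ)
    (horth : ∫ τ, h τ * deriv ρ τ = 0) (z : ℝ) :
    v1star (fun y => -ρ (-y)) (fun y => h (-y)) z = v1star ρ h (-z) := by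
  have htail (ς : ℝ) : ∫ τ in Ioi ς, h (-τ) * deriv ρ (-τ) = -∫ τ in Ioi (-ς), h τ * deriv ρ τ := by
    rw [integral_comp_neg_Ioi ς fun τ => h τ * deriv ρ τ, eq_neg_iff_add_eq_zero,
      intervalIntegral.integral_Iic_add_Ioi hint.integrableOn hint.integrableOn, horth]
  simp only [v1star, deriv_neg_comp_neg, htail]
  rw [intervalIntegral.integral_comp_neg
      fun ς => ((deriv ρ ς) ^ 2)⁻¹ * -∫ τ in Ioi ς, h τ * deriv ρ τ, neg_zero,
    intervalIntegral.integral_symm]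
  simp only [mul_neg, intervalIntegral.integral_neg, neg_neg]

theorem tendsto_v1star_atBot (hρ : Continuous (deriv ρ)) (hρ_pos : ∀ z, 0 < deriv ρ z)
    (hlog : Tendsto (logDeriv (deriv ρ)) atBot (𝓝 c)) (hc : 0 < c) (hh : Continuous h)
    (hint : Integrable fun τ => h τ * deriv ρ τ) (hH : Tendsto h atBot (𝓝 H))
    (horth : ∫ τ, h τ * deriv ρ τ = 0) :
    Tendsto (v1star ρ h) atBot (𝓝 (H / c ^ 2)) := by
  have hlog_neg : Tendsto (logDeriv fun z => deriv ρ (-z)) atTop (𝓝 (-c)) := by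
    refine (hlog.comp tendsto_neg_atTop_atBot).neg.congr fun z => ?_
    simp only [Function.comp_apply, logDeriv_apply, deriv_comp_neg, neg_div]
  have hreflected : Tendsto (v1star (fun z => -ρ (-z)) fun z => h (-z)) atTop
      (𝓝 (H / (-c) ^ 2)) := by
    refine tendsto_v1star_atTop (a := 0) ?_ ?_ ?_ (neg_neg_iff_pos.2 hc) (hh.comp continuous_neg)
      ?_ (hH.comp tendsto_neg_atTop_atBot) <;> rw [deriv_neg_comp_neg]
    · exact hρ.comp continuous_neg
    · exact fun z => hρ_pos (-z)
    · exact hlog_neg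
    · exact hint.comp_neg.integrableOn
  rw [neg_sq] at hreflected
  refine (hreflected.comp tendsto_neg_atBot_atTop).congr fun z => ?_
  rw [Function.comp_apply, v1star_neg_comp_neg hint horth, neg_neg]

end V1star

/-- `ρ` is an increasing heteroclinic orbit of the scalar equation `u' = F u`, running from `p` at
`-∞` to `q` at `+∞`. When `F` is continuous, `p` and `q` are then equilibria. -/
structure IsHeteroclinicOrbit (F : ℝ → ℝ) (p q : ℝ) (ρ : ℝ → ℝ) : Prop where
  isIntegralCurve : IsIntegralCurve ρ fun _ => F
  field_pos : ∀ z, 0 < F (ρ z)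
  tendsto_atBot : Tendsto ρ atBot (𝓝 p)
  tendsto_atTop : Tendsto ρ atTop (𝓝 q)

namespace IsHeteroclinicOrbit

variable {F ρ : ℝ → ℝ} {p q : ℝ}

theorem deriv_apply (hρ : IsHeteroclinicOrbit F p q ρ) (z : ℝ) : deriv ρ z = F (ρ z) :=
  (hρ.isIntegralCurve z).deriv

theorem deriv_pos (hρ : IsHeteroclinicOrbit F p q ρ) (z : ℝ) : 0 < deriv ρ z :=
  hρ.deriv_apply z ▸ hρ.field_pos z

theorem continuous_deriv (hρ : IsHeteroclinicOrbit F p q ρ) (hF : Continuous F) :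
    Continuous (deriv ρ) := by
  rw [funext hρ.deriv_apply]
  exact hF.comp (continuous_iff_continuousAt.2 fun z => (hρ.isIntegralCurve z).continuousAt)

theorem integrable_deriv (hρ : IsHeteroclinicOrbit F p q ρ) : Integrable (deriv ρ) := by
  rw [funext hρ.deriv_apply]
  exact integrable_of_hasDerivAt_of_nonneg hρ.isIntegralCurve (fun z => (hρ.field_pos z).le)
    hρ.tendsto_atBot hρ.tendsto_atTop

theorem logDeriv_deriv (hρ : IsHeteroclinicOrbit F p q ρ) (hF : Differentiable ℝ F) :
    logDeriv (deriv ρ) = deriv F ∘ ρ := by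
  funext z
  have hderiv2 : HasDerivAt (F ∘ ρ) (deriv F (ρ z) * F (ρ z)) z :=
    (hF (ρ z)).hasDerivAt.comp z (hρ.isIntegralCurve z)
  rw [logDeriv_apply, show deriv ρ = F ∘ ρ from funext hρ.deriv_apply, hderiv2.deriv]
  exact mul_div_cancel_right₀ _ (hρ.field_pos z).ne'

end IsHeteroclinicOrbit

theorem statement12_general {F ρ h : ℝ → ℝ} {p q hminus hplus : ℝ}
    (hρ : IsHeteroclinicOrbit F p q ρ) (hF : ContDiff ℝ 1 F) (hp : 0 < deriv F p)
    (hq : deriv F q < 0) (hh : Continuous h) (hbot : Tendsto h atBot (𝓝 hminus))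
    (htop : Tendsto h atTop (𝓝 hplus)) (horth : ∫ z, h z * deriv ρ z = 0) :
    (∃ M, ∀ z, |v1star ρ h z| ≤ M) ∧
    Tendsto (v1star ρ h) atTop (𝓝 (hplus / deriv F q ^ 2)) ∧
    Tendsto (v1star ρ h) atBot (𝓝 (hminus / deriv F p ^ 2)) := by
  have hdρ : Continuous (deriv ρ) := hρ.continuous_deriv hF.continuous
  have hdF : Continuous (deriv F) := hF.continuous_deriv_one
  have hlog : logDeriv (deriv ρ) = deriv F ∘ ρ := hρ.logDeriv_deriv (hF.differentiable one_ne_zero)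
  obtain ⟨M, hM⟩ := exists_norm_le_of_tendsto_atBot_atTop hh hbot htop
  have hint : Integrable fun z => h z * deriv ρ z :=
    hρ.integrable_deriv.bdd_mul hh.aestronglyMeasurable (.of_forall hM)
  have hv_top : Tendsto (v1star ρ h) atTop (𝓝 (hplus / deriv F q ^ 2)) :=
    tendsto_v1star_atTop hdρ hρ.deriv_pos
      (hlog ▸ (hdF.tendsto q).comp hρ.tendsto_atTop) hq hh (hint.integrableOn (s := Ioi 0)) htop
  have hv_bot : Tendsto (v1star ρ h) atBot (𝓝 (hminus / deriv F p ^ 2)) :=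
    tendsto_v1star_atBot hdρ hρ.deriv_pos
      (hlog ▸ (hdF.tendsto p).comp hρ.tendsto_atBot) hp hh hint hbot horth
  have hv : Continuous (v1star ρ h) := continuous_v1star hdρ (fun z => (hρ.deriv_pos z).ne') hh
    (hint.integrableOn (s := Ioi 0))
  exact ⟨exists_norm_le_of_tendsto_atBot_atTop hv hv_bot hv_top, hv_top, hv_bot⟩

/-- The right-hand side of the equation for `ρ₀`, whose equilibria are `±a` and `±b`. -/
noncomputable def quarticField (a b u : ℝ) : ℝ :=
  Real.sqrt 2 / 2 * (u ^ 2 - a ^ 2) * (b ^ 2 - u ^ 2)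

section QuarticField

variable {a b : ℝ}

theorem contDiff_quarticField {n : WithTop ℕ∞} : ContDiff ℝ n (quarticField a b) := by
  unfold quarticField
  fun_prop

theorem quarticField_pos (ha : 0 ≤ a) {u : ℝ} (hau : a < u) (hub : u < b) :
    0 < quarticField a b u := by
  have hau2 : 0 < u ^ 2 - a ^ 2 := sub_pos.2 (pow_lt_pow_left₀ hau ha two_ne_zero)
  have hub2 : 0 < b ^ 2 - u ^ 2 :=
    sub_pos.2 (pow_lt_pow_left₀ hub (ha.trans hau.le) two_ne_zero)
  unfold quarticField
  positivity

theorem deriv_quarticField (a b u : ℝ) :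
    deriv (quarticField a b) u = Real.sqrt 2 * u * (a ^ 2 + b ^ 2 - 2 * u ^ 2) := by
  have hsq := hasDerivAt_pow 2 u
  refine HasDerivAt.deriv ((((hsq.sub_const (a ^ 2)).const_mul (Real.sqrt 2 / 2)).mul
    (hsq.const_sub (b ^ 2))).congr_deriv ?_)
  push_cast
  ring

theorem deriv_quarticField_left_pos (ha : 0 < a) (hab : a < b) :
    0 < deriv (quarticField a b) a := by
  have hsq : a ^ 2 < b ^ 2 := pow_lt_pow_left₀ hab ha.le two_ne_zero
  rw [deriv_quarticField]
  exact mul_pos (by positivity) (by linarith)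

theorem deriv_quarticField_right_neg (ha : 0 ≤ a) (hab : a < b) :
    deriv (quarticField a b) b < 0 := by
  have hsq : a ^ 2 < b ^ 2 := pow_lt_pow_left₀ hab ha two_ne_zero
  have hb : 0 < b := ha.trans_lt hab
  rw [deriv_quarticField]
  exact mul_neg_of_pos_of_neg (by positivity) (by linarith)

theorem deriv_quarticField_left_sq (a b : ℝ) :
    deriv (quarticField a b) a ^ 2 = 2 * (a ^ 2 - b ^ 2) ^ 2 * a ^ 2 := by
  rw [deriv_quarticField, mul_pow, mul_pow, Real.sq_sqrt zero_le_two]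
  ring

theorem deriv_quarticField_right_sq (a b : ℝ) :
    deriv (quarticField a b) b ^ 2 = 2 * (a ^ 2 - b ^ 2) ^ 2 * b ^ 2 := by
  rw [deriv_quarticField, mul_pow, mul_pow, Real.sq_sqrt zero_le_two]
  ring

end QuarticField

/-- If `h` is continuous with exponential convergence to limits `h⁺`, `h⁻`
at `±∞` (rate `α` with `0 < α < min{√2(b² − a²)a, √2(b² − a²)b}`) and `∫ h ρ₀' = 0`, then
`v₁*` is bounded, with `v₁*(+∞) = h⁺/(2(a² − b²)²b²)` and `v₁*(−∞) = h⁻/(2(a² − b²)²a²)`. -/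
theorem statement12 (a b α : ℝ) (ha : 0 < a) (hab : a < b)
    (hα : 0 < α)
    (hα' : α < min (Real.sqrt 2 * (b ^ 2 - a ^ 2) * a) (Real.sqrt 2 * (b ^ 2 - a ^ 2) * b))
    (ρ₀ : ℝ → ℝ) (hreg : ContDiff ℝ 1 ρ₀)
    (hderiv : ∀ z, deriv ρ₀ z =
      Real.sqrt 2 / 2 * ((ρ₀ z) ^ 2 - a ^ 2) * (b ^ 2 - (ρ₀ z) ^ 2))
    (hbnd : ∀ z, a < ρ₀ z ∧ ρ₀ z < b)
    (hbot : Tendsto ρ₀ atBot (nhds a))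
    (htop : Tendsto ρ₀ atTop (nhds b))
    (h : ℝ → ℝ) (hh : Continuous h)
    (hplus hminus C : ℝ) (hC : 0 < C)
    (hdecp : ∀ z : ℝ, 0 ≤ z → |h z - hplus| ≤ C * Real.exp (-α * z))
    (hdecm : ∀ z : ℝ, z ≤ 0 → |h z - hminus| ≤ C * Real.exp (α * z))
    (horth : (∫ z : ℝ, h z * deriv ρ₀ z) = 0) :
    (∃ M, ∀ z, |v1star ρ₀ h z| ≤ M) ∧
    Tendsto (v1star ρ₀ h) atTop (nhds (hplus / (2 * (a ^ 2 - b ^ 2) ^ 2 * b ^ 2))) ∧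
    Tendsto (v1star ρ₀ h) atBot (nhds (hminus / (2 * (a ^ 2 - b ^ 2) ^ 2 * a ^ 2))) := by
  have hρ : IsHeteroclinicOrbit (quarticField a b) a b ρ₀ :=
    { isIntegralCurve := fun z =>
        (hreg.differentiable one_ne_zero z).hasDerivAt.congr_deriv (hderiv z)
      field_pos := fun z => quarticField_pos ha.le (hbnd z).1 (hbnd z).2
      tendsto_atBot := hbot
      tendsto_atTop := htop }
  have hh_top : Tendsto h atTop (𝓝 hplus) :=
    tendsto_of_norm_sub_le_mul_exp (tendsto_id.const_mul_atTop_of_neg (neg_neg_iff_pos.2 hα))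
      ((eventually_ge_atTop 0).mono hdecp)
  have hh_bot : Tendsto h atBot (𝓝 hminus) :=
    tendsto_of_norm_sub_le_mul_exp (tendsto_id.const_mul_atBot hα)
      ((eventually_le_atBot 0).mono hdecm)
  simpa only [deriv_quarticField_left_sq, deriv_quarticField_right_sq] using
    statement12_general hρ contDiff_quarticField (deriv_quarticField_left_pos ha hab)
      (deriv_quarticField_right_neg ha.le hab) hh hh_bot hh_top horth
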